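/- arXiv:0805.0826 — 2 statements merged into one kernel-verified Lean document; each statement's English description precedes it below -/
import Mathlib

section
/- (Existence of the separatrix.) Let s > 0, let P satisfy H1 and H2, fix x₀ > 0, and suppose ∫_{x₀}^∞ P(z)·z^{−1−2/s} dz < ∞. Then there exists a threshold value γ* with γ* > γ_c(x₀) such that for every γ₀ > 0: a positive solution of the Dyson–Schwinger ODE on [x₀, ∞) with initial value γ₀ at x₀ exists if and only if γ₀ ≥ γ*. The global solution with initial value γ* is called the separatrix. -/
open Real MeasureTheory Filter Set

noncomputable section

/-- `γ` is a positive solution of the Dyson–Schwinger ODE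
`γ'(x) = (γ(x) + γ(x)² − P(x)) / (s·x·γ(x))` on the set `I`. -/
def IsDSSolution (s : ℝ) (P γ : ℝ → ℝ) (I : Set ℝ) : Prop :=
  (∀ x ∈ I, 0 < γ x) ∧
    ∀ x ∈ I, HasDerivWithinAt γ ((γ x + (γ x) ^ 2 - P x) / (s * x * γ x)) I x

/-- Hypothesis H1: `P` is twice continuously differentiable on `[0,∞)`,
`P 0 = 0`, and `P x > 0` for `x > 0`. -/
def H1 (P : ℝ → ℝ) : Prop :=
  ContDiffOn ℝ 2 P (Set.Ici 0) ∧ P 0 = 0 ∧ ∀ x > (0 : ℝ), 0 < P x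

/-- Hypothesis H2: `P` is strictly increasing on `[0,∞)`. -/
def H2 (P : ℝ → ℝ) : Prop := StrictMonoOn P (Set.Ici 0)

/-- The nullcline `γ_c(x) = (√(1 + 4 P x) − 1)/2`. -/
def gammaC (P : ℝ → ℝ) (x : ℝ) : ℝ := (Real.sqrt (1 + 4 * P x) - 1) / 2


open scoped NNReal

section ODE

variable {v : ℝ → ℝ → ℝ} {a : ℝ}

theorem dist_le_of_solution_Icc {K : ℝ≥0} {T : ℝ}
    (hK : ∀ t ∈ Icc a T, LipschitzWith K (v t)) {f g : ℝ → ℝ}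
    (hf : ∀ t ∈ Icc a T, HasDerivWithinAt f (v t (f t)) (Icc a T) t)
    (hg : ∀ t ∈ Icc a T, HasDerivWithinAt g (v t (g t)) (Icc a T) t) :
    ∀ t ∈ Icc a T, dist (f t) (g t) ≤ dist (f a) (g a) * exp (K * (t - a)) := by
  have right : ∀ {h : ℝ → ℝ}, (∀ t ∈ Icc a T, HasDerivWithinAt h (v t (h t)) (Icc a T) t) →
      ∀ t ∈ Ico a T, HasDerivWithinAt h (v t (h t)) (Ici t) t := fun hh t ht =>
    (hh t (Ico_subset_Icc_self ht)).mono_of_mem_nhdsWithin (Icc_mem_nhdsGE_of_mem ht)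
  exact dist_le_of_trajectories_ODE_of_mem (s := fun _ => univ)
    (fun t ht => (hK t (Ico_subset_Icc_self ht)).lipschitzOnWith)
    (fun t ht => (hf t ht).continuousWithinAt) (right hf) (fun _ _ => trivial)
    (fun t ht => (hg t ht).continuousWithinAt) (right hg) (fun _ _ => trivial) le_rfl

theorem eqOn_of_solution_Icc {K : ℝ≥0} {T : ℝ}
    (hK : ∀ t ∈ Icc a T, LipschitzWith K (v t)) {f g : ℝ → ℝ}
    (hf : ∀ t ∈ Icc a T, HasDerivWithinAt f (v t (f t)) (Icc a T) t)
    (hg : ∀ t ∈ Icc a T, HasDerivWithinAt g (v t (g t)) (Icc a T) t) (h : f a = g a) :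
    EqOn f g (Icc a T) := fun t ht => by
  have := dist_le_of_solution_Icc hK hf hg t ht
  rw [h, dist_self, zero_mul] at this
  exact dist_le_zero.1 this

/-- Solutions of a scalar ODE preserve the order of their initial values. -/
theorem le_of_solution_Icc {K : ℝ≥0} {T : ℝ} (haT : a ≤ T)
    (hK : ∀ t ∈ Icc a T, LipschitzWith K (v t)) {f g : ℝ → ℝ}
    (hf : ∀ t ∈ Icc a T, HasDerivWithinAt f (v t (f t)) (Icc a T) t)
    (hg : ∀ t ∈ Icc a T, HasDerivWithinAt g (v t (g t)) (Icc a T) t) (h : f a ≤ g a) :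
    f T ≤ g T := by
  by_contra! hlt
  obtain ⟨c, hc, hfg⟩ : ∃ c ∈ Icc a T, g c - f c = 0 := by
    have := intermediate_value_Icc' haT (f := fun t => g t - f t)
      (fun t ht => ((hg t ht).sub (hf t ht)).continuousWithinAt)
    exact this ⟨by linarith, by linarith⟩
  have hsub : Icc c T ⊆ Icc a T := Icc_subset_Icc_left hc.1
  have := eqOn_of_solution_Icc (fun t ht => hK t (hsub ht))
    (fun t ht => (hf t (hsub ht)).mono hsub) (fun t ht => (hg t (hsub ht)).mono hsub)
    (by linarith) ⟨hc.2, le_rfl⟩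
  exact hlt.ne' this

theorem exists_solution_Icc {K L : ℝ≥0} {T : ℝ} (haT : a ≤ T)
    (hK : ∀ t ∈ Icc a T, LipschitzWith K (v t)) (hL : ∀ t ∈ Icc a T, ∀ y, ‖v t y‖ ≤ L)
    (hc : ∀ y, ContinuousOn (v · y) (Icc a T)) (b : ℝ) :
    ∃ f : ℝ → ℝ, f a = b ∧ ∀ t ∈ Icc a T, HasDerivWithinAt f (v t (f t)) (Icc a T) t := by
  have hPL : IsPicardLindelof v (⟨a, left_mem_Icc.2 haT⟩ : Icc a T) b (L * (T - a).toNNReal) 0 L K :=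
    { lipschitzOnWith := fun t ht => (hK t ht).lipschitzOnWith
      continuousOn := fun y _ => hc y
      norm_le := fun t ht y _ => hL t ht y
      mul_max_le := by simp [haT] }
  exact hPL.exists_eq_forall_mem_Icc_hasDerivWithinAt₀

/-- Global forward existence for a scalar ODE whose right-hand side is, on compact time intervals,
bounded and Lipschitz in the state. -/
theorem exists_solution_Ici
    (hK : ∀ T, ∃ K : ℝ≥0, ∀ t ∈ Icc a T, LipschitzWith K (v t))
    (hL : ∀ T, ∃ L : ℝ≥0, ∀ t ∈ Icc a T, ∀ y, ‖v t y‖ ≤ L)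
    (hc : ∀ y, ContinuousOn (v · y) (Ici a)) (b : ℝ) :
    ∃ f : ℝ → ℝ, f a = b ∧ ∀ t ∈ Ici a, HasDerivWithinAt f (v t (f t)) (Ici a) t := by
  have key : ∀ T, ∃ f : ℝ → ℝ, a ≤ T →
      f a = b ∧ ∀ t ∈ Icc a T, HasDerivWithinAt f (v t (f t)) (Icc a T) t := by
    intro T
    by_cases haT : a ≤ T
    · obtain ⟨K, hK⟩ := hK T
      obtain ⟨L, hL⟩ := hL T
      obtain ⟨f, hf⟩ := exists_solution_Icc haT hK hL (fun y => (hc y).mono Icc_subset_Ici_self) b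
      exact ⟨f, fun _ => hf⟩
    · exact ⟨0, fun h => absurd h haT⟩
  choose F hF using key
  have agree : ∀ t T, a ≤ t → t ≤ T → F t t = F T t := by
    intro t T hat htT
    obtain ⟨K, hK⟩ := hK t
    have hsub : Icc a t ⊆ Icc a T := Icc_subset_Icc_right htT
    exact eqOn_of_solution_Icc hK (hF t hat).2
      (fun u hu => ((hF T (hat.trans htT)).2 u (hsub hu)).mono hsub)
      ((hF t hat).1.trans (hF T (hat.trans htT)).1.symm) ⟨hat, le_rfl⟩
  refine ⟨fun t => F t t, (hF a le_rfl).1, fun t ht => ?_⟩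
  have hat : a ≤ t := ht
  have hsol := (hF (t + 1) (by linarith)).2 t ⟨hat, by linarith⟩
  have hmem : Icc a (t + 1) ∈ nhdsWithin t (Ici a) := by
    rw [← Ici_inter_Iic]
    exact inter_mem_nhdsWithin _ (Iic_mem_nhds (by linarith))
  have hEq := agree t (t + 1) hat (by linarith)
  rw [← hEq] at hsol
  refine (hsol.mono_of_mem_nhdsWithin hmem).congr_of_eventuallyEq ?_ hEq
  filter_upwards [hmem] with u hu using agree u (t + 1) hu.1 hu.2

end ODE

theorem le_gammaC_iff {P : ℝ → ℝ} {x g : ℝ} (hP : 0 ≤ P x) (hg : 0 ≤ g) :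
    g ≤ gammaC P x ↔ g + g ^ 2 ≤ P x := by
  have : g ≤ gammaC P x ↔ 2 * g + 1 ≤ √(1 + 4 * P x) := by
    unfold gammaC
    constructor <;> intro h <;> linarith
  rw [this, Real.le_sqrt (by linarith) (by linarith)]
  constructor <;> intro h <;> nlinarith

theorem gammaC_pos {P : ℝ → ℝ} {x : ℝ} (hP : 0 < P x) : 0 < gammaC P x := by
  have : 1 < √(1 + 4 * P x) := Real.lt_sqrt_of_sq_lt (by linarith)
  unfold gammaC
  linarith

theorem gammaC_le_gammaC {P : ℝ → ℝ} {x y : ℝ} (h : P x ≤ P y) : gammaC P x ≤ gammaC P y := by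
  unfold gammaC
  gcongr

section Nullcline

variable {s : ℝ} {P γ : ℝ → ℝ} {x₀ x₁ : ℝ}

/-- A solution that starts on or below the nullcline never exceeds its initial value. -/
theorem IsDSSolution.le_of_below_nullcline (hs : 0 < s) (hx₁ : 0 < x₁)
    (hP : MonotoneOn P (Ici x₁)) (hγ : IsDSSolution s P γ (Ici x₁))
    (hle : γ x₁ + γ x₁ ^ 2 ≤ P x₁) {x : ℝ} (hx : x₁ ≤ x) : γ x ≤ γ x₁ := by
  set g := γ x₁ with hg
  have hg0 : 0 < g := hγ.1 x₁ self_mem_Ici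
  set K := (3 + 1 / g) / (s * x₁) with hK
  refine le_of_forall_pos_le_add fun ε hε => ?_
  set η := ε / exp (K * (x - x₁)) with hη
  have hη0 : 0 < η := by positivity
  have hB : ∀ t, HasDerivAt (fun t => g + η * exp (K * (t - x₁)))
      (η * (exp (K * (t - x₁)) * K)) t := fun t => by
    simpa using ((((hasDerivAt_id t).sub_const x₁).const_mul K).exp.const_mul η).const_add g
  have main := image_le_of_deriv_right_lt_deriv_boundary (a := x₁) (b := x) (f := γ)
    (fun t ht => (hγ.2 t ht.1).continuousWithinAt.mono Icc_subset_Ici_self)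
    (fun t ht => (hγ.2 t ht.1).mono (Ici_subset_Ici.2 ht.1)) (by simp [← hg]; positivity) hB
    (fun t ht hEq => ?_) (right_mem_Icc.2 hx)
  · have : η * exp (K * (x - x₁)) = ε := by rw [hη]; field_simp
    simpa [this] using main
  · have ht : x₁ ≤ t := ht.1
    set w := η * exp (K * (t - x₁)) with hw
    have hw0 : 0 < w := by positivity
    have hPt : g + g ^ 2 ≤ P t := hle.trans (hP self_mem_Ici ht ht)
    have hsx : s * x₁ ≤ s * t := by gcongr
    have hsx₁ : 0 < s * x₁ := by positivity
    have h1 : (γ t + γ t ^ 2 - P t) / (s * t * γ t) ≤ w * (2 + 1 / g) / (s * x₁) := by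
      rw [hEq, ← div_div, div_right_comm]
      refine div_le_div₀ (by positivity) ?_ hsx₁ hsx
      rw [div_le_iff₀ (by positivity)]
      have : w * (2 + 1 / g) * (g + w) = w * (2 * g + 1) + w * w * (2 + 1 / g) := by
        field_simp
      rw [this]
      have : 0 ≤ w * w * (1 + 1 / g) := by positivity
      nlinarith
    have h2 : w * (2 + 1 / g) / (s * x₁) < w * (3 + 1 / g) / (s * x₁) := by
      gcongr
      norm_num
    have h3 : η * (exp (K * (t - x₁)) * K) = w * (3 + 1 / g) / (s * x₁) := by
      rw [← mul_assoc, ← hw, hK, mul_div_assoc]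
    rw [h3]
    exact h1.trans_lt h2

/-- A positive solution that is global to the right stays strictly above the nullcline. -/
theorem IsDSSolution.gammaC_lt (hs : 0 < s) (hx₀ : 0 < x₀) (hP1 : H1 P) (hP2 : H2 P)
    (hγ : IsDSSolution s P γ (Ici x₀)) (hx₁ : x₀ ≤ x₁) : gammaC P x₁ < γ x₁ := by
  by_contra! hle
  have hx₁0 : 0 < x₁ := hx₀.trans_le hx₁
  have hsub : Ici x₁ ⊆ Ici x₀ := Ici_subset_Ici.2 hx₁
  have hγ₁ : IsDSSolution s P γ (Ici x₁) :=
    ⟨fun x hx => hγ.1 x (hsub hx), fun x hx => (hγ.2 x (hsub hx)).mono hsub⟩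
  rw [le_gammaC_iff (hP1.2.2 _ hx₁0).le (hγ.1 _ hx₁).le] at hle
  have hmono : MonotoneOn P (Ici x₁) := hP2.monotoneOn.mono (Ici_subset_Ici.2 hx₁0.le)
  set x₂ := x₁ + 1
  have hx₂ : 0 < x₂ := by positivity
  set c := P x₂ - P x₁
  have hc : 0 < c := sub_pos.2 (hP2 hx₁0.le hx₂.le (lt_add_one x₁))
  have hdecay : ∀ x, x₂ ≤ x → γ x ^ 2 ≤ γ x₂ ^ 2 - 2 * c / s * (log x - log x₂) := by
    intro x hx
    have hpos : ∀ t ∈ Icc x₂ x, 0 < t := fun t ht => hx₂.trans_le ht.1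
    have hmem : ∀ t ∈ Icc x₂ x, x₁ ≤ t := fun t ht => (lt_add_one x₁).le.trans ht.1
    have hB : ∀ t ∈ Icc x₂ x, HasDerivAt
        (fun t => γ x₂ ^ 2 - 2 * c / s * (log t - log x₂)) (-(2 * c / s * t⁻¹)) t := fun t ht =>
      (((hasDerivAt_log (hpos t ht).ne').sub_const (log x₂)).const_mul (2 * c / s)).const_sub _
    refine image_le_of_deriv_right_le_deriv_boundary (a := x₂) (b := x) (f := fun t => γ t ^ 2)
      (f' := fun t => 2 * γ t * ((γ t + γ t ^ 2 - P t) / (s * t * γ t)))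
      (B := fun t => γ x₂ ^ 2 - 2 * c / s * (log t - log x₂)) (B' := fun t => -(2 * c / s * t⁻¹))
      (fun t ht => ?_) (fun t ht => ?_) (by simp)
      (fun t ht => (hB t ht).continuousAt.continuousWithinAt)
      (fun t ht => (hB t (Ico_subset_Icc_self ht)).hasDerivWithinAt) (fun t ht => ?_)
      (right_mem_Icc.2 hx)
    · exact ((hγ₁.2 t (hmem t ht)).continuousWithinAt.mono
        (fun u hu => hmem u hu)).pow 2
    · have ht₁ := hmem t (Ico_subset_Icc_self ht)
      simpa using ((hγ₁.2 t ht₁).mono (Ici_subset_Ici.2 ht₁)).fun_pow 2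
    · have ht₁ := hmem t (Ico_subset_Icc_self ht)
      have ht0 := hpos t (Ico_subset_Icc_self ht)
      have hγt := hγ₁.1 t ht₁
      have hγle := hγ₁.le_of_below_nullcline hs hx₁0 hmono hle ht₁
      have hPt : P x₂ ≤ P t := hP2.monotoneOn hx₂.le ht0.le ht.1
      have hsq : γ t ^ 2 ≤ γ x₁ ^ 2 := by gcongr
      have hF : γ t + γ t ^ 2 - P t ≤ -c := by
        simp only [c]
        linarith
      calc 2 * γ t * ((γ t + γ t ^ 2 - P t) / (s * t * γ t))
          = 2 / (s * t) * (γ t + γ t ^ 2 - P t) := by field_simp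
        _ ≤ 2 / (s * t) * (-c) := by gcongr
        _ = -(2 * c / s * t⁻¹) := by field_simp
  have hlim : Tendsto (fun x => 2 * c / s * (log x - log x₂)) atTop atTop :=
    (tendsto_atTop_add_const_right _ _ tendsto_log_atTop).const_mul_atTop (by positivity)
  obtain ⟨x, hxlarge, hx⟩ := ((hlim.eventually_gt_atTop (γ x₂ ^ 2)).and
    (eventually_ge_atTop x₂)).exists
  have := hdecay x hx
  nlinarith [sq_nonneg (γ x)]

end Nullcline

/-- In the variable `h = γ / x ^ (1 / s)` the Dyson–Schwinger ODE reads `h' = reducedField s P δ x h`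
as long as `γ ≥ δ`; below `δ` the singular term is frozen. -/
def reducedField (s : ℝ) (P : ℝ → ℝ) (δ x h : ℝ) : ℝ :=
  (1 - P x / max (x ^ (1 / s) * h) δ) / (s * x * x ^ (1 / s))

section ReducedField

variable {s δ x₀ : ℝ} {P : ℝ → ℝ}

theorem hasDerivAt_rpow_one_div {x : ℝ} (hx : 0 < x) :
    HasDerivAt (fun x : ℝ => x ^ (1 / s)) (x ^ (1 / s) / (s * x)) x := by
  convert Real.hasDerivAt_rpow_const (p := 1 / s) (Or.inl hx.ne') using 1
  rw [Real.rpow_sub_one hx.ne', div_mul_div_comm, one_mul]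

theorem exists_lipschitzWith_reducedField (hs : 0 < s) (hδ : 0 < δ) (hx₀ : 0 < x₀)
    (hP1 : H1 P) (hP2 : H2 P) (T : ℝ) :
    ∃ K : ℝ≥0, ∀ x ∈ Icc x₀ T, LipschitzWith K (reducedField s P δ x) := by
  refine ⟨(P T / (s * x₀ * δ ^ 2)).toNNReal, fun x hx => LipschitzWith.of_dist_le' fun h k => ?_⟩
  have hx0 : 0 < x := hx₀.trans_le hx.1
  have hPx : 0 < P x := hP1.2.2 x hx0
  have hPT : P x ≤ P T := hP2.monotoneOn hx0.le (hx0.le.trans hx.2) hx.2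
  have hq : 0 < x ^ (1 / s) := by positivity
  unfold reducedField
  set q := x ^ (1 / s)
  set m := max (q * h) δ with hm
  set n := max (q * k) δ with hn
  have hmδ : δ ≤ m := le_max_right _ _
  have hnδ : δ ≤ n := le_max_right _ _
  have hm0 : 0 < m := hδ.trans_le hmδ
  have hn0 : 0 < n := hδ.trans_le hnδ
  have hmn : |m - n| ≤ q * |h - k| := by
    have := abs_max_sub_max_le_abs (q * h) (q * k) δ
    rwa [← mul_sub, abs_mul, abs_of_pos hq] at this
  have hEq : (1 - P x / m) / (s * x * q) - (1 - P x / n) / (s * x * q) =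
      P x / (s * x * q * (m * n)) * (m - n) := by
    field_simp
    ring
  rw [Real.dist_eq, Real.dist_eq, hEq, abs_mul, abs_of_pos (by positivity)]
  calc P x / (s * x * q * (m * n)) * |m - n|
      ≤ P x / (s * x * q * (m * n)) * (q * |h - k|) := by gcongr
    _ = P x / (s * x * (m * n)) * |h - k| := by field_simp
    _ ≤ P T / (s * x₀ * δ ^ 2) * |h - k| := by
      have h₀ : x₀ ≤ x := hx.1
      have : δ ^ 2 ≤ m * n := by rw [sq]; gcongr
      gcongr
      exact hPx.le.trans hPT

theorem exists_norm_reducedField_le (hs : 0 < s) (hδ : 0 < δ) (hx₀ : 0 < x₀)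
    (hP1 : H1 P) (hP2 : H2 P) (T : ℝ) :
    ∃ L : ℝ≥0, ∀ x ∈ Icc x₀ T, ∀ h, ‖reducedField s P δ x h‖ ≤ L := by
  refine ⟨((1 + P T / δ) / (s * x₀ * x₀ ^ (1 / s))).toNNReal, fun x hx h => ?_⟩
  refine le_trans ?_ (Real.le_coe_toNNReal _)
  have h₀ : x₀ ≤ x := hx.1
  have hx0 : 0 < x := hx₀.trans_le hx.1
  have hPx : 0 < P x := hP1.2.2 x hx0
  have hPT : P x ≤ P T := hP2.monotoneOn hx0.le (hx0.le.trans hx.2) hx.2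
  have hm : δ ≤ max (x ^ (1 / s) * h) δ := le_max_right _ _
  have hm0 := hδ.trans_le hm
  unfold reducedField
  rw [norm_div, Real.norm_of_nonneg (r := s * x * x ^ (1 / s)) (by positivity)]
  have hnum : ‖1 - P x / max (x ^ (1 / s) * h) δ‖ ≤ 1 + P T / δ := by
    refine (norm_sub_le _ _).trans ?_
    rw [norm_one, Real.norm_of_nonneg (by positivity)]
    gcongr
    exact hPx.le.trans hPT
  exact div_le_div₀ ((norm_nonneg _).trans hnum) hnum (by positivity) (by gcongr)

theorem continuousOn_reducedField (hs : 0 < s) (hδ : 0 < δ) (hx₀ : 0 < x₀) (hP1 : H1 P) (h : ℝ) :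
    ContinuousOn (reducedField s P δ · h) (Ici x₀) := by
  have hpos : ∀ x ∈ Ici x₀, 0 < x := fun x hx => hx₀.trans_le hx
  have hP : ContinuousOn P (Ici x₀) := hP1.1.continuousOn.mono (Ici_subset_Ici.2 hx₀.le)
  have hq : ContinuousOn (fun x : ℝ => x ^ (1 / s)) (Ici x₀) := fun x hx =>
    (hasDerivAt_rpow_one_div (hpos x hx)).continuousAt.continuousWithinAt
  unfold reducedField
  refine ContinuousOn.div (continuousOn_const.sub (hP.div
    ((hq.mul continuousOn_const).sup continuousOn_const) fun x _ => ?_))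
    ((continuousOn_const.mul continuousOn_id).mul hq) fun x hx => ?_
  · exact (hδ.trans_le (le_max_right _ _)).ne'
  · have := hpos x hx
    positivity

/-- A solution of the reduced equation that stays above the cutoff gives a positive solution of the
Dyson–Schwinger ODE. -/
theorem isDSSolution_of_reducedField (hs : 0 < s) (hδ : 0 < δ) (hx₀ : 0 < x₀) {h : ℝ → ℝ}
    (hh : ∀ x ∈ Ici x₀, HasDerivWithinAt h (reducedField s P δ x (h x)) (Ici x₀) x)
    (hle : ∀ x ∈ Ici x₀, δ ≤ x ^ (1 / s) * h x) :
    IsDSSolution s P (fun x => x ^ (1 / s) * h x) (Ici x₀) := by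
  refine ⟨fun x hx => hδ.trans_le (hle x hx), fun x hx => ?_⟩
  have hx0 : 0 < x := hx₀.trans_le hx
  have hq : 0 < x ^ (1 / s) := by positivity
  have hγ := hδ.trans_le (hle x hx)
  have hh0 : 0 < h x := pos_of_mul_pos_right hγ hq.le
  refine ((hasDerivAt_rpow_one_div (s := s) hx0).hasDerivWithinAt.fun_mul (hh x hx)).congr_deriv ?_
  rw [reducedField, max_eq_left (hle x hx)]
  field_simp
  ring

theorem IsDSSolution.hasDerivWithinAt_reducedField (hs : 0 < s) (hx₀ : 0 < x₀)
    {γ : ℝ → ℝ} (hγ : IsDSSolution s P γ (Ici x₀)) (hle : ∀ x ∈ Ici x₀, δ ≤ γ x) :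
    ∀ x ∈ Ici x₀, HasDerivWithinAt (fun x => γ x / x ^ (1 / s))
      (reducedField s P δ x (γ x / x ^ (1 / s))) (Ici x₀) x := by
  intro x hx
  have hx0 : 0 < x := hx₀.trans_le hx
  have hq : 0 < x ^ (1 / s) := by positivity
  have hγ0 := hγ.1 x hx
  refine ((hγ.2 x hx).fun_div
    (hasDerivAt_rpow_one_div (s := s) hx0).hasDerivWithinAt hq.ne').congr_deriv ?_
  rw [reducedField, mul_div_cancel₀ _ hq.ne', max_eq_left (hle x hx)]
  field_simp
  ring

/-- Some solution of the reduced equation stays above the cutoff: it is bounded below by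
`√(C - (2 / s) ∫ P z / z ^ (1 + 2 / s))`. -/
theorem exists_cutoff_le_of_integrableOn (hs : 0 < s) (hδ : 0 < δ) (hx₀ : 0 < x₀) (hP1 : H1 P)
    (hInt : IntegrableOn (fun z => P z / z ^ (1 + 2 / s)) (Ici x₀)) :
    ∃ c, ∀ h : ℝ → ℝ, h x₀ = c →
      (∀ x ∈ Ici x₀, HasDerivWithinAt h (reducedField s P δ x (h x)) (Ici x₀) x) →
      ∀ x ∈ Ici x₀, δ ≤ x ^ (1 / s) * h x := by
  set p : ℝ → ℝ := fun z => P z / z ^ (1 + 2 / s) with hp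
  have hpos : ∀ x ∈ Ici x₀, 0 < x := fun x hx => hx₀.trans_le hx
  have hp0 : ∀ x ∈ Ici x₀, 0 ≤ p x := fun x hx => by
    have := hpos x hx
    have := hP1.2.2 x this
    positivity
  have hpc : ContinuousOn p (Ioi 0) :=
    (hP1.1.continuousOn.mono Ioi_subset_Ici_self).div
      (fun x hx => (Real.continuousAt_rpow_const _ _ (Or.inl (ne_of_gt hx))).continuousWithinAt)
      fun x hx => (Real.rpow_pos_of_pos hx _).ne'
  have hpI : ∀ x ∈ Ici x₀, IntervalIntegrable p volume x₀ x := fun x hx =>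
    (hpc.mono (by rw [uIcc_of_le hx]; exact fun t ht => hpos t ht.1)).intervalIntegrable
  set q₀ := x₀ ^ (1 / s)
  have hq₀ : 0 < q₀ := by positivity
  set I := ∫ z in Ici x₀, p z
  set C := (δ / q₀) ^ 2 + 2 / s * I with hC
  set Z : ℝ → ℝ := fun x => C - 2 / s * ∫ z in x₀..x, p z with hZ
  have hZge : ∀ x ∈ Ici x₀, (δ / q₀) ^ 2 ≤ Z x := fun x hx => by
    have : ∫ z in x₀..x, p z ≤ I := by
      rw [intervalIntegral.integral_of_le hx]
      refine setIntegral_mono_set hInt ?_ (Ioc_subset_Icc_self.trans Icc_subset_Ici_self).eventuallyLE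
      exact (ae_restrict_iff' measurableSet_Ici).2 (ae_of_all _ hp0)
    have : 2 / s * ∫ z in x₀..x, p z ≤ 2 / s * I := by gcongr
    simp only [hZ, hC]
    linarith
  have hZ0 : ∀ x ∈ Ici x₀, 0 < Z x := fun x hx => lt_of_lt_of_le (by positivity) (hZge x hx)
  have hsq : ∀ x ∈ Ici x₀, δ ≤ x ^ (1 / s) * √(Z x) := fun x hx => by
    have h1 : δ / q₀ ≤ √(Z x) := Real.le_sqrt_of_sq_le (hZge x hx)
    have h2 : q₀ ≤ x ^ (1 / s) := Real.rpow_le_rpow hx₀.le hx (by positivity)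
    calc δ = q₀ * (δ / q₀) := by field_simp
      _ ≤ x ^ (1 / s) * √(Z x) := mul_le_mul h2 h1 (by positivity) (hq₀.le.trans h2)
  refine ⟨√C, fun h h₀ hh x hx => (hsq x hx).trans ?_⟩
  have hZd : ∀ t ∈ Ici x₀, HasDerivWithinAt Z (-(2 / s * p t)) (Ici x₀) t := fun t ht => by
    have hint := intervalIntegral.integral_hasDerivAt_right (hpI t ht)
      (hpc.stronglyMeasurableAtFilter isOpen_Ioi t (hpos t ht))
      (hpc.continuousAt (Ioi_mem_nhds (hpos t ht)))
    exact ((hint.const_mul (2 / s)).const_sub C).hasDerivWithinAt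
  have hLd : ∀ t ∈ Ici x₀, HasDerivWithinAt (fun t => √(Z t))
      (-(2 / s * p t) / (2 * √(Z t))) (Ici x₀) t := fun t ht => (hZd t ht).sqrt (hZ0 t ht).ne'
  have hbar : √(Z x) ≤ h x := by
    refine image_le_of_deriv_right_lt_deriv_boundary' (a := x₀) (b := x)
      (fun t ht => (hLd t ht.1).continuousWithinAt.mono Icc_subset_Ici_self)
      (fun t ht => (hLd t ht.1).mono (Ici_subset_Ici.2 ht.1)) (by simp [hZ, h₀])
      (fun t ht => (hh t ht.1).continuousWithinAt.mono Icc_subset_Ici_self)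
      (fun t ht => (hh t ht.1).mono (Ici_subset_Ici.2 ht.1)) (fun t ht hEq => ?_)
      (right_mem_Icc.2 hx)
    have ht0 := hpos t ht.1
    have hq : 0 < t ^ (1 / s) := by positivity
    have hr : 0 < √(Z t) := Real.sqrt_pos.2 (hZ0 t ht.1)
    have hpow : t ^ (1 + 2 / s) = t * (t ^ (1 / s)) ^ 2 := by
      rw [Real.rpow_add ht0, Real.rpow_one, ← Real.rpow_mul_natCast ht0.le]
      congr 2
      push_cast
      ring
    rw [← hEq, reducedField, max_eq_left (hsq t ht.1)]
    simp only [hp, hpow]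
    have : 0 < 1 / (s * t * t ^ (1 / s)) := by positivity
    have hsplit : (1 - P t / (t ^ (1 / s) * √(Z t))) / (s * t * t ^ (1 / s)) =
        1 / (s * t * t ^ (1 / s)) +
          -(2 / s * (P t / (t * (t ^ (1 / s)) ^ 2))) / (2 * √(Z t)) := by
      field_simp
      ring
    rw [hsplit]
    linarith
  have hx0 := hpos x hx
  gcongr

end ReducedField

theorem stmt_13 (s : ℝ) (hs : 0 < s) (P : ℝ → ℝ) (hP1 : H1 P) (hP2 : H2 P)
    (x₀ : ℝ) (hx₀ : 0 < x₀)
    (hInt : MeasureTheory.IntegrableOn (fun z => P z / z ^ (1 + 2 / s)) (Set.Ici x₀)) :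
    ∃ γstar : ℝ, gammaC P x₀ < γstar ∧
      ∀ γ₀ > (0 : ℝ),
        ((∃ γ : ℝ → ℝ, IsDSSolution s P γ (Set.Ici x₀) ∧ γ x₀ = γ₀) ↔ γstar ≤ γ₀) := by
  set δ := gammaC P x₀
  have hδ : 0 < δ := gammaC_pos (hP1.2.2 x₀ hx₀)
  set q₀ := x₀ ^ (1 / s)
  have hq₀0 : 0 < q₀ := by positivity
  have hlip := exists_lipschitzWith_reducedField hs hδ hx₀ hP1 hP2
  choose u hu₀ hu using exists_solution_Ici hlip
    (exists_norm_reducedField_le hs hδ hx₀ hP1 hP2) (continuousOn_reducedField hs hδ hx₀ hP1)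
  have huIcc : ∀ c T, ∀ x ∈ Icc x₀ T,
      HasDerivWithinAt (u c) (reducedField s P δ x (u c x)) (Icc x₀ T) x :=
    fun c T x hx => (hu c x hx.1).mono Icc_subset_Ici_self
  set S : Set ℝ := {c | ∀ x ∈ Ici x₀, δ ≤ x ^ (1 / s) * u c x} with hS
  have hS_sol : ∀ c ∈ S, IsDSSolution s P (fun x => x ^ (1 / s) * u c x) (Ici x₀) :=
    fun c hc => isDSSolution_of_reducedField hs hδ hx₀ (hu c) hc
  have hS_of_sol : ∀ γ, IsDSSolution s P γ (Ici x₀) → γ x₀ / q₀ ∈ S := by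
    intro γ hγ x hx
    have hle : ∀ x ∈ Ici x₀, δ ≤ γ x := fun x hx =>
      (gammaC_le_gammaC (hP2.monotoneOn hx₀.le (hx₀.le.trans hx) hx)).trans
        (hγ.gammaC_lt hs hx₀ hP1 hP2 hx).le
    obtain ⟨K, hK⟩ := hlip x
    have hEq := eqOn_of_solution_Icc hK (huIcc (γ x₀ / q₀) x)
      (fun t ht => (hγ.hasDerivWithinAt_reducedField hs hx₀ hle t ht.1).mono Icc_subset_Ici_self)
      (hu₀ _) (right_mem_Icc.2 hx)
    have hq : 0 < x ^ (1 / s) := Real.rpow_pos_of_pos (hx₀.trans_le hx) _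
    rw [hEq, mul_div_cancel₀ _ hq.ne']
    exact hle x hx
  have hS_closed : IsClosed S := by
    simp only [hS, ofPred_forall]
    refine isClosed_biInter fun x hx => isClosed_le continuous_const (continuous_const.mul ?_)
    obtain ⟨K, hK⟩ := hlip x
    refine (LipschitzWith.of_dist_le' (K := exp (K * (x - x₀))) fun c d => ?_).continuous
    have := dist_le_of_solution_Icc hK (huIcc c x) (huIcc d x) x (right_mem_Icc.2 hx)
    rwa [hu₀, hu₀, mul_comm] at this
  have hS_upper : ∀ c ∈ S, ∀ d, c ≤ d → d ∈ S := by
    intro c hc d hcd x hx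
    obtain ⟨K, hK⟩ := hlip x
    have hle := le_of_solution_Icc hx hK (huIcc c x) (huIcc d x) (by rwa [hu₀, hu₀])
    have hq : 0 < x ^ (1 / s) := Real.rpow_pos_of_pos (hx₀.trans_le hx) _
    exact (hc x hx).trans (by gcongr)
  have hS_nonempty : S.Nonempty := by
    obtain ⟨c, hc⟩ := exists_cutoff_le_of_integrableOn hs hδ hx₀ hP1 hInt
    exact ⟨c, hc (u c) (hu₀ c) (hu c)⟩
  have hS_gt : ∀ c ∈ S, δ < q₀ * c := fun c hc => by
    have := (hS_sol c hc).gammaC_lt hs hx₀ hP1 hP2 le_rfl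
    simp only [hu₀] at this
    exact this
  have hS_bdd : BddBelow S := ⟨0, fun c hc =>
    (pos_of_mul_pos_right (hδ.trans (hS_gt c hc)) hq₀0.le).le⟩
  have hmem : sInf S ∈ S := hS_closed.csInf_mem hS_nonempty hS_bdd
  refine ⟨q₀ * sInf S, hS_gt _ hmem, fun γ₀ _ => ⟨?_, fun hle => ?_⟩⟩
  · rintro ⟨γ, hγ, rfl⟩
    exact (le_div_iff₀' hq₀0).1 (csInf_le hS_bdd (hS_of_sol γ hγ))
  · refine ⟨_, hS_sol (γ₀ / q₀) (hS_upper _ hmem _ ((le_div_iff₀' hq₀0).2 hle)), ?_⟩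
    simp only [hu₀]
    exact mul_div_cancel₀ _ hq₀0.ne'
end
end

section
/- (Heteroclinic orbit of the running-coupling system.) Let s > 0 and let P satisfy H1 and H2. For each x* > 0 there exists a unique pair of differentiable functions x, γ₁ : ℝ → ℝ satisfying the system γ₁'(L) = γ₁(L) + γ₁(L)² − P(x(L)) and x'(L) = s·x(L)·γ₁(L) for all L ∈ ℝ, with x(0) = x* and γ₁(0) = 0. This solution satisfies x(L) > 0 for all L ∈ ℝ, and it is a heteroclinic orbit connecting the equilibria (0,0) and (0,−1): (x(L), γ₁(L)) → (0, 0) as L → −∞ and (x(L), γ₁(L)) → (0, −1) as L → +∞. -/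
open Real MeasureTheory Filter Set

noncomputable section

open scoped NNReal Topology

/-- A bounded, globally Lipschitz vector field has a solution defined for all times. -/
theorem exists_forall_hasDerivAt_of_lipschitzWith_of_bounded {E : Type*} [NormedAddCommGroup E]
    [NormedSpace ℝ E] [CompleteSpace E] {f : E → E} {K M : ℝ≥0} (hf : LipschitzWith K f)
    (hM : ∀ x, ‖f x‖ ≤ M) (x₀ : E) :
    ∃ α : ℝ → E, α 0 = x₀ ∧ ∀ t, HasDerivAt α (f (α t)) t := by
  have hloc : ∀ T : ℝ, ∃ α : ℝ → E, α 0 = x₀ ∧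
      ∀ t ∈ Ioo (-T) T, HasDerivAt α (f (α t)) t := by
    intro T
    rcases le_or_gt T 0 with hT | hT
    · exact ⟨fun _ => x₀, rfl, fun t ht => absurd (ht.1.trans ht.2) (by linarith)⟩
    have hPL : IsPicardLindelof (fun _ => f) (tmin := -T) (tmax := T)
        ⟨0, by constructor <;> linarith⟩ x₀ (M * T.toNNReal) 0 M K :=
      { lipschitzOnWith := fun _ _ => hf.lipschitzOnWith
        continuousOn := fun _ _ => continuousOn_const
        norm_le := fun _ _ x _ => hM x
        mul_max_le := by simp [hT.le] }
    obtain ⟨α, h0, hα⟩ := hPL.exists_eq_forall_mem_Icc_hasDerivWithinAt₀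
    exact ⟨α, h0, fun t ht =>
      (hα t (Ioo_subset_Icc_self ht)).hasDerivAt (Icc_mem_nhds ht.1 ht.2)⟩
  choose α h0 hα using hloc
  have heq : ∀ {S T : ℝ}, 0 < S → S ≤ T → EqOn (α S) (α T) (Ioo (-S) S) := by
    intro S T hS hST
    refine ODE_solution_unique_of_mem_Ioo (v := fun _ => f) (s := fun _ => univ) (t₀ := 0) (K := K)
      (fun _ _ => hf.lipschitzOnWith) ⟨by linarith, hS⟩ (fun t ht => ⟨hα S t ht, mem_univ _⟩)
      (fun t ht => ⟨hα T t ⟨by linarith [ht.1], by linarith [ht.2]⟩, mem_univ _⟩) (by simp [h0])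
  refine ⟨fun t => α (|t| + 1) t, by simp [h0], fun t => ?_⟩
  have ht : t ∈ Ioo (-(|t| + 1)) (|t| + 1) := abs_lt.1 (lt_add_one _)
  refine (hα (|t| + 1) t ht).congr_of_eventuallyEq ?_
  filter_upwards [Ioo_mem_nhds ht.1 ht.2] with r hr
  have hr' : r ∈ Ioo (-(|r| + 1)) (|r| + 1) := abs_lt.1 (lt_add_one _)
  rcases le_total |r| |t| with h | h
  · exact heq (by positivity) (by linarith) hr'
  · exact (heq (by positivity) (by linarith) hr).symm

theorem hasDerivAt_comp_neg {f : ℝ → ℝ} {f' t : ℝ} (hf : HasDerivAt f f' (-t)) :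
    HasDerivAt (fun r => f (-r)) (-f') t :=
  (hf.comp t (hasDerivAt_neg t)).congr_deriv (by ring)

theorem antitoneOn_Ici_of_hasDerivAt_nonpos {φ φ' : ℝ → ℝ} {a : ℝ}
    (hφ : ∀ t ≥ a, HasDerivAt φ (φ' t) t) (h : ∀ t ≥ a, φ' t ≤ 0) : AntitoneOn φ (Ici a) := by
  refine antitoneOn_of_hasDerivWithinAt_nonpos (f' := φ') (convex_Ici a)
    (fun t ht => (hφ t ht).continuousAt.continuousWithinAt) (fun t ht => ?_) (fun t ht => ?_)
  all_goals rw [interior_Ici] at ht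
  · exact (hφ t (le_of_lt ht)).hasDerivWithinAt
  · exact h t (le_of_lt ht)

/-- A level that is only crossed downwards is an upper barrier. -/
theorem le_of_hasDerivAt_neg_of_eq {φ φ' : ℝ → ℝ} {a c : ℝ}
    (hφ : ∀ t ≥ a, HasDerivAt φ (φ' t) t) (ha : φ a ≤ c) (hc : ∀ t ≥ a, φ t = c → φ' t < 0)
    {t : ℝ} (ht : a ≤ t) : φ t ≤ c :=
  image_le_of_deriv_right_lt_deriv_boundary (f := φ) (f' := φ') (a := a) (b := t)
    (B := fun _ => c) (B' := fun _ => 0)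
    (fun r hr => (hφ r hr.1).continuousAt.continuousWithinAt)
    (fun r hr => (hφ r hr.1).hasDerivWithinAt) ha (fun r => hasDerivAt_const r c)
    (fun r hr => hc r hr.1) ⟨ht, le_rfl⟩

/-- A nonnegative function damped at a positive rate, with a forcing term tending to zero,
tends to zero. -/
theorem tendsto_zero_of_deriv_le_neg_mul_add {k k' p : ℝ → ℝ} {a t₀ : ℝ} (ha : 0 < a)
    (hk : ∀ t ≥ t₀, HasDerivAt k (k' t) t) (hk0 : ∀ t ≥ t₀, 0 ≤ k t)
    (hle : ∀ t ≥ t₀, k' t ≤ -a * k t + p t) (hp : Tendsto p atTop (𝓝 0)) :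
    Tendsto k atTop (𝓝 0) := by
  rw [Metric.tendsto_atTop]
  intro ε hε
  obtain ⟨T, hT⟩ := eventually_atTop.1 ((hp.eventually (gt_mem_nhds
    (show 0 < a * (ε / 2) by positivity))).and (eventually_ge_atTop t₀))
  have hT0 : t₀ ≤ T := (hT T le_rfl).2
  have hanti : AntitoneOn (fun t => (k t - ε / 2) * Real.exp (a * t)) (Ici T) := by
    refine antitoneOn_Ici_of_hasDerivAt_nonpos
      (φ' := fun t => k' t * Real.exp (a * t) + (k t - ε / 2) * (Real.exp (a * t) * a))
      (fun t ht => ?_) (fun t ht => ?_)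
    · have hexp : HasDerivAt (fun t => Real.exp (a * t)) (Real.exp (a * t) * a) t := by
        simpa using ((hasDerivAt_id t).const_mul a).exp
      exact ((hk t (hT0.trans ht)).sub_const _).mul hexp
    · have h1 := hle t (hT0.trans ht)
      have h2 := (hT t ht).1
      have h3 : k' t + (k t - ε / 2) * a ≤ 0 := by linarith
      calc _ = (k' t + (k t - ε / 2) * a) * Real.exp (a * t) := by ring
        _ ≤ 0 := mul_nonpos_of_nonpos_of_nonneg h3 (Real.exp_pos _).le
  have hdecay : Tendsto (fun t => (k T - ε / 2) * Real.exp (a * T) * Real.exp (-(a * t)))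
      atTop (𝓝 0) := by
    simpa using (Real.tendsto_exp_neg_atTop_nhds_zero.comp
      (tendsto_id.const_mul_atTop ha)).const_mul ((k T - ε / 2) * Real.exp (a * T))
  obtain ⟨N, hN⟩ := eventually_atTop.1 ((hdecay.eventually (gt_mem_nhds (half_pos hε))).and
    (eventually_ge_atTop T))
  refine ⟨N, fun t ht => ?_⟩
  obtain ⟨h1, h2⟩ := hN t ht
  have h3 := hanti self_mem_Ici h2 h2
  have h4 : k t - ε / 2 ≤ (k T - ε / 2) * Real.exp (a * T) * Real.exp (-(a * t)) := by
    rw [Real.exp_neg, ← div_eq_mul_inv, le_div_iff₀ (Real.exp_pos _)]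
    exact h3
  rw [Real.dist_eq, sub_zero, abs_of_nonneg (hk0 t (hT0.trans h2))]
  linarith

section HalfLine

variable {s σ C : ℝ} {P y h : ℝ → ℝ}

/-- Along `h' = σ h + h² - P y`, `y' = s y h`, with `h` bounded and nonpositive, the coupling `y`
tends to zero. Both time directions of the running-coupling system have this form, with
`σ = 1` and `σ = -1`. -/
theorem tendsto_coupling_zero (hs : 0 < s) (hσ : σ ≤ C) (hP : ∀ x > (0 : ℝ), 0 < P x)
    (hP2 : H2 P) (hy : ∀ t ≥ (0 : ℝ), 0 < y t)
    (hy' : ∀ t ≥ (0 : ℝ), HasDerivAt y (s * y t * h t) t)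
    (hh' : ∀ t ≥ (0 : ℝ), HasDerivAt h (σ * h t + h t ^ 2 - P (y t)) t)
    (hC : ∀ t ≥ (0 : ℝ), -C ≤ h t) (hh : ∀ t ≥ (0 : ℝ), h t ≤ 0) :
    Tendsto y atTop (𝓝 0) := by
  have hanti : AntitoneOn y (Ici 0) := antitoneOn_Ici_of_hasDerivAt_nonpos hy' fun t ht =>
    mul_nonpos_of_nonneg_of_nonpos (mul_pos hs (hy t ht)).le (hh t ht)
  rw [Metric.tendsto_atTop]
  intro ε hε
  obtain ⟨T, hT0, hT⟩ : ∃ T ≥ (0 : ℝ), y T < ε := by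
    by_contra! hcon
    set b := (C - σ) / s
    have hb0 : 0 ≤ b := div_nonneg (by linarith) hs.le
    have hbs : b * s = C - σ := div_mul_cancel₀ _ hs.ne'
    have hF : AntitoneOn (fun t => h t + b * Real.log (y t) + P ε * t) (Ici 0) := by
      refine antitoneOn_Ici_of_hasDerivAt_nonpos
        (φ' := fun t => (σ * h t + h t ^ 2 - P (y t)) + b * (s * y t * h t / y t) + P ε * 1)
        (fun t ht => ?_) (fun t ht => ?_)
      · exact ((hh' t ht).add (((hy' t ht).log (hy t ht).ne').const_mul b)).add
          ((hasDerivAt_id t).const_mul _)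
      · have h1 : P ε ≤ P (y t) := hP2.monotoneOn hε.le (hy t ht).le (hcon t ht)
        have h2 : b * (s * y t * h t / y t) = (C - σ) * h t := by
          rw [← hbs]
          field_simp [(hy t ht).ne']
        have h3 := mul_nonneg (sub_nonneg.2 (hC t ht)) (neg_nonneg.2 (hh t ht))
        simp only [h2]
        nlinarith
    have hPε := hP ε hε
    have hbound : ∀ t ≥ (0 : ℝ), P ε * t ≤ h 0 + b * Real.log (y 0) + C - b * Real.log ε := by
      intro t ht
      have h1 := hF self_mem_Ici ht ht
      have h2 := mul_le_mul_of_nonneg_left (Real.log_le_log hε (hcon t ht)) hb0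
      have h3 := hC t ht
      simp only at h1
      linarith
    obtain ⟨t, ht, ht0⟩ := (((tendsto_id.const_mul_atTop hPε).eventually_gt_atTop
      (h 0 + b * Real.log (y 0) + C - b * Real.log ε)).and (eventually_ge_atTop 0)).exists
    exact absurd (hbound t ht0) (not_le.2 ht)
  refine ⟨T, fun t ht => ?_⟩
  have ht0 : (0 : ℝ) ≤ t := hT0.trans ht
  rw [Real.dist_eq, sub_zero, abs_of_pos (hy t ht0)]
  exact (hanti hT0 ht0 ht).trans_lt hT

theorem tendsto_comp_coupling_zero (hP1 : H1 P) (hy : ∀ t ≥ (0 : ℝ), 0 < y t)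
    (hlim : Tendsto y atTop (𝓝 0)) : Tendsto (fun t => P (y t)) atTop (𝓝 0) := by
  have hc : Tendsto P (𝓝[Ici 0] 0) (𝓝 0) := by
    simpa [hP1.2.1] using (hP1.1.continuousOn 0 self_mem_Ici).tendsto
  exact hc.comp (tendsto_nhdsWithin_iff.2 ⟨hlim, by
    filter_upwards [eventually_ge_atTop 0] with t ht using (hy t ht).le⟩)

theorem tendsto_zero_of_stable_linear_part (hp : Tendsto (fun t => P (y t)) atTop (𝓝 0))
    (hh' : ∀ t ≥ (0 : ℝ), HasDerivAt h (-1 * h t + h t ^ 2 - P (y t)) t)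
    (hh : ∀ t ≥ (0 : ℝ), h t ≤ 0) : Tendsto h atTop (𝓝 0) := by
  have := tendsto_zero_of_deriv_le_neg_mul_add (k := fun t => -h t) one_pos
    (fun t ht => (hh' t ht).neg) (fun t ht => neg_nonneg.2 (hh t ht))
    (fun t ht => by nlinarith [sq_nonneg (h t)]) hp
  simpa using this.neg

theorem tendsto_neg_one_of_unstable_linear_part (hP : ∀ x > (0 : ℝ), 0 < P x)
    (hy : ∀ t ≥ (0 : ℝ), 0 < y t) (hp : Tendsto (fun t => P (y t)) atTop (𝓝 0))
    (hh' : ∀ t ≥ (0 : ℝ), HasDerivAt h (1 * h t + h t ^ 2 - P (y t)) t)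
    (hC : ∀ t ≥ (0 : ℝ), -C ≤ h t) (hh : ∀ t ≥ (0 : ℝ), h t ≤ 0) :
    Tendsto h atTop (𝓝 (-1)) := by
  have hneg : h 1 < 0 := by
    refine (hh 1 zero_le_one).lt_of_ne fun h1 => ?_
    have hmax : IsLocalMax h 1 := by
      filter_upwards [lt_mem_nhds (zero_lt_one' ℝ)] with t ht
      rw [h1]
      exact hh t ht.le
    have := hmax.hasDerivAt_eq_zero (hh' 1 zero_le_one)
    rw [h1] at this
    linarith [hP _ (hy 1 zero_le_one)]
  obtain ⟨δ, hδ, hδ2, hδ1⟩ : ∃ δ > (0 : ℝ), δ ≤ 1 / 2 ∧ h 1 ≤ -δ :=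
    ⟨min (1 / 2) (-h 1), lt_min (by norm_num) (by linarith), min_le_left _ _, by
      linarith [min_le_right (1 / 2) (-h 1)]⟩
  have hhδ : ∀ t ≥ (1 : ℝ), h t ≤ -δ := fun t ht =>
    le_of_hasDerivAt_neg_of_eq (fun r hr => hh' r (zero_le_one.trans hr)) hδ1
      (fun r hr hrδ => by
        have := hP _ (hy r (zero_le_one.trans hr))
        rw [hrδ]
        nlinarith) ht
  have hsq : Tendsto (fun t => (h t + 1) ^ 2) atTop (𝓝 0) := by
    refine tendsto_zero_of_deriv_le_neg_mul_add (t₀ := 1) (a := 2 * δ) (by positivity)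
      (fun t ht => ((hh' t (zero_le_one.trans ht)).add_const 1).pow 2)
      (fun t _ => sq_nonneg _) (p := fun t => 2 * C * P (y t)) (fun t ht => ?_)
      (by simpa using hp.const_mul (2 * C))
    have ht0 : (0 : ℝ) ≤ t := zero_le_one.trans ht
    have h1 := mul_nonneg (sub_nonneg.2 (hhδ t ht)) (sq_nonneg (h t + 1))
    have h2 := mul_nonneg (show 0 ≤ h t + 1 + C by linarith [hC t ht0]) (hP _ (hy t ht0)).le
    norm_num
    nlinarith
  have habs : Tendsto (fun t => |h t + 1|) atTop (𝓝 0) := by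
    simpa [Real.sqrt_sq_eq_abs] using hsq.sqrt
  simpa using ((tendsto_zero_iff_abs_tendsto_zero _).2 habs).sub_const 1

/-- Forward bounds for the equation whose right-hand side is truncated at height `M + 2`. -/
theorem truncated_bounds {M : ℝ} {q : ℝ → ℝ} (hσ : |σ| ≤ 1) (hq : ∀ t, 0 < q t)
    (hqM : ∀ t, q t ≤ M) (h0 : h 0 = 0)
    (hh' : ∀ t, HasDerivAt h (σ * max (-(M + 2)) (min (M + 2) (h t)) +
      max (-(M + 2)) (min (M + 2) (h t)) ^ 2 - q t) t) {t : ℝ} (ht : 0 ≤ t) :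
    -(M + 2) ≤ h t ∧ h t ≤ 0 := by
  have hM : 0 < M := (hq 0).trans_le (hqM 0)
  constructor
  · refine neg_le.1 (le_of_hasDerivAt_neg_of_eq (φ := fun t => -h t) (fun r _ => (hh' r).neg)
      (by simp [h0]; linarith) (fun r _ hr => ?_) ht)
    have hr' : h r = -(M + 2) := by linarith
    rw [hr', min_eq_right (by linarith), max_self]
    have h1 := hqM r
    have h2 := (abs_le.1 hσ).2
    nlinarith
  · refine le_of_hasDerivAt_neg_of_eq (fun r _ => hh' r) h0.le (fun r _ hr => ?_) ht
    rw [hr, min_eq_right (by linarith), max_eq_right (by linarith)]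
    linarith [hq r]

end HalfLine

/-- Every solution of `X' = s X γ` that starts positive stays positive. -/
theorem pos_of_hasDerivAt_mul {s : ℝ} {X γ : ℝ → ℝ} (hγ : Continuous γ)
    (hX : ∀ t, HasDerivAt X (s * X t * γ t) t) (h0 : 0 < X 0) (t : ℝ) : 0 < X t := by
  have hI : ∀ t, HasDerivAt (fun t => ∫ r in (0 : ℝ)..t, γ r) (γ t) t := fun t =>
    intervalIntegral.integral_hasDerivAt_right (hγ.intervalIntegrable _ _)
      (hγ.stronglyMeasurableAtFilter _ _) hγ.continuousAt
  have hd : ∀ t, HasDerivAt (fun t => X t * Real.exp (-s * ∫ r in (0 : ℝ)..t, γ r)) 0 t := by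
    intro t
    refine ((hX t).mul ((hI t).const_mul (-s)).exp).congr_deriv ?_
    ring
  have hconst := is_const_of_deriv_eq_zero (fun t => (hd t).differentiableAt)
    (fun t => (hd t).deriv) t 0
  simp only [intervalIntegral.integral_same, mul_zero, Real.exp_zero, mul_one] at hconst
  exact pos_of_mul_pos_left (hconst ▸ h0) (Real.exp_pos _).le

/-- The running-coupling system is Lipschitz on bounded boxes with nonnegative coupling. -/
theorem exists_lipschitzOnWith_field {P : ℝ → ℝ} (hP : ContDiffOn ℝ 2 P (Ici 0))
    {u : ℝ × ℝ → ℝ} (hu : ContDiff ℝ 2 u) (a b c : ℝ) :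
    ∃ K : ℝ≥0, LipschitzOnWith K (fun p : ℝ × ℝ => (u p, p.2 + p.2 ^ 2 - P p.1))
      (Icc 0 a ×ˢ Icc b c) := by
  have hPf : ContDiffOn ℝ 2 (fun p : ℝ × ℝ => P p.1) (Icc 0 a ×ˢ Icc b c) :=
    hP.comp contDiff_fst.contDiffOn fun p hp => hp.1.1
  have h2 : ContDiffOn ℝ 2 (fun p : ℝ × ℝ => p.2 + p.2 ^ 2) (Icc 0 a ×ˢ Icc b c) :=
    (contDiff_snd.add (contDiff_snd.pow 2)).contDiffOn
  exact (hu.contDiffOn.prodMk (h2.sub hPf)).exists_lipschitzOnWith two_ne_zero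
    ((convex_Icc _ _).prod (convex_Icc _ _)) (isCompact_Icc.prod isCompact_Icc)

theorem lipschitzWith_exp_min (c : ℝ) :
    LipschitzWith (Real.exp c).toNNReal (fun u : ℝ => Real.exp (min u c)) := by
  have hexp : LipschitzOnWith (Real.exp c).toNNReal Real.exp (Iic c) :=
    (convex_Iic c).lipschitzOnWith_of_nnnorm_deriv_le
      (fun u _ => Real.differentiable_exp.differentiableAt) fun u hu => by
        rw [← NNReal.coe_le_coe]
        simpa [Real.coe_toNNReal _ (Real.exp_pos c).le] using hu
  simpa using! lipschitzOnWith_univ.1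
    (hexp.comp (LipschitzWith.id.min_const c).lipschitzOnWith fun u _ => min_le_right u c)

/-- Uniqueness for the running-coupling system in the half-plane of positive coupling. -/
theorem running_coupling_unique {s : ℝ} {P : ℝ → ℝ} (hP : ContDiffOn ℝ 2 P (Ici 0))
    {X γ X' γ' : ℝ → ℝ} (hX : ∀ t, HasDerivAt X (s * X t * γ t) t)
    (hγ : ∀ t, HasDerivAt γ (γ t + γ t ^ 2 - P (X t)) t)
    (hX' : ∀ t, HasDerivAt X' (s * X' t * γ' t) t)
    (hγ' : ∀ t, HasDerivAt γ' (γ' t + γ' t ^ 2 - P (X' t)) t)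
    (hpos : ∀ t, 0 < X t) (hpos' : ∀ t, 0 < X' t) (hX0 : X' 0 = X 0) (hγ0 : γ' 0 = γ 0) :
    X' = X ∧ γ' = γ := by
  have key : ∀ t, (X' t, γ' t) = (X t, γ t) := by
    intro t
    have hcont : ∀ {f f' : ℝ → ℝ}, (∀ t, HasDerivAt f (f' t) t) → Continuous f := fun hf =>
      continuous_iff_continuousAt.2 fun t => (hf t).continuousAt
    have hbd : ∀ {f : ℝ → ℝ}, Continuous f → ∃ R : ℝ, ∀ r ∈ Icc (-(|t| + 1)) (|t| + 1),
        |f r| ≤ R := fun hf => isCompact_Icc.exists_bound_of_continuousOn hf.continuousOn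
    obtain ⟨R₁, h₁⟩ := hbd (hcont hX)
    obtain ⟨R₂, h₂⟩ := hbd (hcont hX')
    obtain ⟨R₃, h₃⟩ := hbd (hcont hγ)
    obtain ⟨R₄, h₄⟩ := hbd (hcont hγ')
    obtain ⟨K, hK⟩ := exists_lipschitzOnWith_field hP
      (u := fun p => s * p.1 * p.2) (by fun_prop) (max R₁ R₂) (-max R₃ R₄) (max R₃ R₄)
    refine ODE_solution_unique_of_mem_Ioo (f := fun t => (X' t, γ' t)) (g := fun t => (X t, γ t))
      (v := fun _ p => (s * p.1 * p.2, p.2 + p.2 ^ 2 - P p.1)) (t₀ := 0)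
      (a := -(|t| + 1)) (b := |t| + 1) (fun _ _ => hK)
      ⟨by linarith [abs_nonneg t], by positivity⟩ (fun r hr => ⟨(hX' r).prodMk (hγ' r), ?_⟩)
      (fun r hr => ⟨(hX r).prodMk (hγ r), ?_⟩) (by simp [hX0, hγ0]) (abs_lt.1 (lt_add_one _))
    · have hr' := Ioo_subset_Icc_self hr
      exact ⟨⟨(hpos' r).le, (le_abs_self _).trans ((h₂ r hr').trans (le_max_right _ _))⟩,
        abs_le.1 ((h₄ r hr').trans (le_max_right _ _))⟩
    · have hr' := Ioo_subset_Icc_self hr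
      exact ⟨⟨(hpos r).le, (le_abs_self _).trans ((h₁ r hr').trans (le_max_left _ _))⟩,
        abs_le.1 ((h₃ r hr').trans (le_max_left _ _))⟩
  exact ⟨funext fun t => congrArg Prod.fst (key t), funext fun t => congrArg Prod.snd (key t)⟩

/-- The system written for `(log X, γ)` and truncated has a global solution. -/
theorem exists_truncated_solution {P : ℝ → ℝ} (hP : ContDiffOn ℝ 2 P (Ici 0)) (s c u₀ : ℝ)
    (hc : 0 ≤ c) :
    ∃ u g : ℝ → ℝ, u 0 = u₀ ∧ g 0 = 0 ∧
      (∀ t, HasDerivAt u (s * max (-c) (min c (g t))) t) ∧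
      ∀ t, HasDerivAt g (max (-c) (min c (g t)) + max (-c) (min c (g t)) ^ 2
        - P (Real.exp (min (u t) u₀))) t := by
  obtain ⟨K, hK⟩ := exists_lipschitzOnWith_field hP
    (u := fun p => s * p.2) (by fun_prop) (Real.exp u₀) (-c) c
  have hΦ := ((lipschitzWith_exp_min u₀).comp LipschitzWith.prod_fst).prodMk
    (((LipschitzWith.prod_snd (α := ℝ) (β := ℝ)).const_min c).const_max (-c))
  have hmem : ∀ p : ℝ × ℝ, (Real.exp (min p.1 u₀), max (-c) (min c p.2)) ∈
      Icc 0 (Real.exp u₀) ×ˢ Icc (-c) c := fun p =>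
    ⟨⟨(Real.exp_pos _).le, Real.exp_le_exp.2 (min_le_right _ _)⟩,
      le_max_left _ _, max_le (by linarith) (min_le_left _ _)⟩
  have hF := lipschitzOnWith_univ.1 (hK.comp hΦ.lipschitzOnWith fun p _ => hmem p)
  obtain ⟨M, hM⟩ := (isCompact_Icc.prod isCompact_Icc).exists_bound_of_continuousOn hK.continuousOn
  obtain ⟨α, h0, hα⟩ := exists_forall_hasDerivAt_of_lipschitzWith_of_bounded (M := M.toNNReal) hF
    (fun p => (hM _ (hmem p)).trans (Real.le_coe_toNNReal M)) (u₀, 0)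
  refine ⟨fun t => (α t).1, fun t => (α t).2, by simp [h0], by simp [h0],
    fun t => ?_, fun t => ?_⟩
  · exact (hα t).fst
  · exact (hα t).snd

theorem stmt_18 (s : ℝ) (hs : 0 < s) (P : ℝ → ℝ) (hP1 : H1 P) (hP2 : H2 P)
    (xstar : ℝ) (hxstar : 0 < xstar) :
    ∃ X γ₁ : ℝ → ℝ,
      ((∀ L : ℝ, HasDerivAt γ₁ (γ₁ L + (γ₁ L) ^ 2 - P (X L)) L ∧
          HasDerivAt X (s * X L * γ₁ L) L) ∧ X 0 = xstar ∧ γ₁ 0 = 0) ∧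
      (∀ X' γ₁' : ℝ → ℝ,
        ((∀ L : ℝ, HasDerivAt γ₁' (γ₁' L + (γ₁' L) ^ 2 - P (X' L)) L ∧
            HasDerivAt X' (s * X' L * γ₁' L) L) ∧ X' 0 = xstar ∧ γ₁' 0 = 0) →
        X' = X ∧ γ₁' = γ₁) ∧
      (∀ L : ℝ, 0 < X L) ∧
      Filter.Tendsto (fun L => (X L, γ₁ L)) Filter.atBot (nhds (0, 0)) ∧
      Filter.Tendsto (fun L => (X L, γ₁ L)) Filter.atTop (nhds (0, -1)) := by
  have hP := hP1.2.2
  have hexp : Real.exp (Real.log xstar) = xstar := Real.exp_log hxstar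
  set M := P xstar
  have hM0 : 0 < M := hP _ hxstar
  obtain ⟨u, g, hu0, hg0, hu, hg⟩ :=
    exists_truncated_solution hP1.1 s (M + 2) (Real.log xstar) (by linarith)
  have hq : ∀ t, 0 < P (Real.exp (min (u t) (Real.log xstar))) := fun t => hP _ (Real.exp_pos _)
  have hqM : ∀ t, P (Real.exp (min (u t) (Real.log xstar))) ≤ M := fun t =>
    hP2.monotoneOn (Real.exp_pos _).le hxstar.le
      ((Real.exp_le_exp.2 (min_le_right _ _)).trans hexp.le)
  have hfwd : ∀ t ≥ (0 : ℝ), -(M + 2) ≤ g t ∧ g t ≤ 0 := fun t ht =>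
    truncated_bounds (σ := 1) (by simp) hq hqM hg0 (fun t => by simpa using hg t) ht
  have hbwd : ∀ t ≥ (0 : ℝ), -(M + 2) ≤ -g (-t) ∧ -g (-t) ≤ 0 := fun t ht =>
    truncated_bounds (h := fun t => -g (-t)) (σ := -1) (by simp) (fun t => hq (-t))
      (fun t => hqM (-t)) (by simp [hg0]) (fun t => by
        have hclamp : max (-(M + 2)) (min (M + 2) (-g (-t))) =
            -max (-(M + 2)) (min (M + 2) (g (-t))) := by
          grind
        refine (hasDerivAt_comp_neg (hg (-t))).neg.congr_deriv ?_
        rw [hclamp]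
        ring) ht
  have hcl : ∀ t, max (-(M + 2)) (min (M + 2) (g t)) = g t := by
    intro t
    rcases le_total 0 t with ht | ht
    · have := hfwd t ht
      rw [min_eq_right (by linarith), max_eq_right this.1]
    · have := hbwd (-t) (by linarith)
      rw [neg_neg] at this
      rw [min_eq_right (by linarith), max_eq_right (by linarith)]
  simp only [hcl] at hu hg
  have hule : ∀ t, u t ≤ Real.log xstar := by
    intro t
    rcases le_total 0 t with ht | ht
    · rw [← hu0]
      exact antitoneOn_Ici_of_hasDerivAt_nonpos (fun t _ => hu t)
        (fun t ht => mul_nonpos_of_nonneg_of_nonpos hs.le (hfwd t ht).2) self_mem_Ici ht ht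
    · have := antitoneOn_Ici_of_hasDerivAt_nonpos (φ := fun t => u (-t)) (a := 0)
        (fun t _ => hasDerivAt_comp_neg (hu (-t)))
        (fun t ht => by nlinarith [(hbwd t ht).2]) self_mem_Ici
        (show -t ∈ Ici (0 : ℝ) from neg_nonneg.2 ht) (neg_nonneg.2 ht)
      simpa [hu0] using this
  simp only [min_eq_left (hule _)] at hg
  have hX : ∀ t, HasDerivAt (fun t => Real.exp (u t)) (s * Real.exp (u t) * g t) t := fun t =>
    (hu t).exp.congr_deriv (by ring)
  have hXb : ∀ t, HasDerivAt (fun t => Real.exp (u (-t)))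
      (s * Real.exp (u (-t)) * -g (-t)) t := fun t =>
    (hasDerivAt_comp_neg (hX (-t))).congr_deriv (by ring)
  have hgb : ∀ t, HasDerivAt (fun t => -g (-t))
      (-1 * -g (-t) + (-g (-t)) ^ 2 - P (Real.exp (u (-t)))) t := fun t =>
    (hasDerivAt_comp_neg (hg (-t))).neg.congr_deriv (by ring)
  have hgf : ∀ t, HasDerivAt g (1 * g t + g t ^ 2 - P (Real.exp (u t))) t := fun t => by
    simpa using hg t
  refine ⟨fun t => Real.exp (u t), g, ⟨fun t => ⟨hg t, hX t⟩, by simp [hu0, hexp], hg0⟩, ?_,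
    fun t => Real.exp_pos _, ?_, ?_⟩
  · rintro X' γ' ⟨hsol, hX0, hγ0⟩
    refine running_coupling_unique hP1.1 hX hg (fun t => (hsol t).2) (fun t => (hsol t).1)
      (fun t => Real.exp_pos _) ?_ (by simp [hu0, hexp, hX0]) (by rw [hγ0, hg0])
    exact pos_of_hasDerivAt_mul (continuous_iff_continuousAt.2 fun t => (hsol t).1.continuousAt)
      (fun t => (hsol t).2) (hX0 ▸ hxstar)
  · have hlim : Tendsto (fun t => Real.exp (u (-t))) atTop (𝓝 0) :=
      tendsto_coupling_zero hs (by linarith : (-1 : ℝ) ≤ M + 2) hP hP2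
        (fun t _ => Real.exp_pos _) (fun t _ => hXb t) (fun t _ => hgb t)
        (fun t ht => (hbwd t ht).1) (fun t ht => (hbwd t ht).2)
    have hlim' := tendsto_zero_of_stable_linear_part
      (tendsto_comp_coupling_zero hP1 (fun t _ => Real.exp_pos _) hlim) (fun t _ => hgb t)
      (fun t ht => (hbwd t ht).2)
    have hX0 : Tendsto (fun t => Real.exp (u t)) atBot (𝓝 0) := by
      simpa [Function.comp_def] using hlim.comp tendsto_neg_atBot_atTop
    exact hX0.prodMk_nhds (by simpa using hlim'.neg)
  · have hlim : Tendsto (fun t => Real.exp (u t)) atTop (𝓝 0) :=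
      tendsto_coupling_zero hs (by linarith : (1 : ℝ) ≤ M + 2) hP hP2
        (fun t _ => Real.exp_pos _) (fun t _ => hX t) (fun t _ => hgf t)
        (fun t ht => (hfwd t ht).1) (fun t ht => (hfwd t ht).2)
    exact hlim.prodMk_nhds (tendsto_neg_one_of_unstable_linear_part hP
      (fun t _ => Real.exp_pos _)
      (tendsto_comp_coupling_zero hP1 (fun t _ => Real.exp_pos _) hlim) (fun t _ => hgf t)
      (fun t ht => (hfwd t ht).1) (fun t ht => (hfwd t ht).2))
end
end
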